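/- arXiv:1505.03688 — 8 statements merged into one kernel-verified Lean document; each statement's English description precedes it below -/
import Mathlib

section
/- Let ω : ℝ → ℝ be an odd function that is strictly concave on [0, ∞). Then for all real numbers a < b with b − a ∈ ℤ, if ω(b) − ω(a) = (b − a)·ω(1), then ω(a) = a·ω(1) and ω(b) = b·ω(1). -/
/-!
Put `f k = ω k - k * ω 1`. Then `f` is odd and strictly concave on `[0, ∞)` with zeros at `0`
and `1`, so it is positive on `(0, 1)`, and negative and strictly decreasing on `(1, ∞)`. The
secant condition reads `f a = f b`, with `b - a` a positive integer.

* If `a` and `b` lie on the same side of `0`, then by oddness both may be taken nonnegative. As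
  `b ≥ 1`, the common value is nonpositive, and monotonicity on `[1, ∞)` forces `a = 0`
  (`zero_of_same_side`).
* If `a < 0 < b`, put `c = -a`, so that `f b + f c = 0` and `b + c` is a positive integer. If
  neither value is `0`, one of the points, say `b`, exceeds `1` and the other lies in `(0, 1)`.
  Hence `b + c ≥ 2`, and strict concavity about the point `1` gives
  `f b + f c ≤ f (2 - c) + f c < 2 * f 1 = 0`, a contradiction (`zero_of_opposite_sides`).
-/

/-- Strict concavity on `[0, ∞)` in denominator-free three-point form, together with the
normalization `f 0 = f 1 = 0`. -/
structure NormalizedConcave (f : ℝ → ℝ) : Prop where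
  zero : f 0 = 0
  one : f 1 = 0
  chord : ∀ x y z : ℝ, 0 ≤ x → x < y → y < z →
    (z - y) * f x + (y - x) * f z < (z - x) * f y

namespace NormalizedConcave

variable {f : ℝ → ℝ}

lemma pos (h : NormalizedConcave f) {x : ℝ} (h0 : 0 < x) (h1 : x < 1) : 0 < f x := by
  have := h.chord 0 x 1 le_rfl h0 h1
  simpa [h.zero, h.one] using this

lemma neg (h : NormalizedConcave f) {x : ℝ} (h1 : 1 < x) : f x < 0 := by
  have := h.chord 0 1 x le_rfl one_pos h1
  simpa [h.zero, h.one] using this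

lemma anti (h : NormalizedConcave f) {x y : ℝ} (hx : 1 ≤ x) (hxy : x < y) : f y < f x := by
  rcases hx.eq_or_lt with rfl | hx
  · rw [h.one]
    exact h.neg hxy
  · have h1 := h.chord 1 x y zero_le_one hx hxy
    have h2 := h.neg (hx.trans hxy)
    rw [h.one] at h1
    by_contra! h3
    nlinarith [mul_le_mul_of_nonneg_left h3 (by linarith : (0 : ℝ) ≤ y - 1),
      mul_neg_of_pos_of_neg (by linarith : (0 : ℝ) < y - x) h2]

lemma zero_of_same_side (h : NormalizedConcave f) {a b : ℝ} (ha : 0 ≤ a) (hab : 1 ≤ b - a)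
    (hf : f a = f b) : f a = 0 := by
  rcases ha.eq_or_lt with rfl | ha
  · exact h.zero
  · have hb := h.neg (by linarith : 1 < b)
    rcases lt_or_ge a 1 with h1 | h1
    · linarith [h.pos ha h1]
    · linarith [h.anti h1 (by linarith : a < b)]

lemma zero_of_opposite_sides (h : NormalizedConcave f) {b c : ℝ} (hc : 0 < c) (hcb : c ≤ b)
    (hn : ∃ z : ℤ, b + c = (z : ℝ)) (hf : f b + f c = 0) : f b = 0 := by
  rcases lt_trichotomy b 1 with hb | rfl | hb
  · linarith [h.pos hc (by linarith), h.pos (by linarith : 0 < b) hb]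
  · exact h.one
  · exfalso
    have hfb := h.neg hb
    have hc1 : c < 1 := by
      rcases lt_trichotomy c 1 with h1 | rfl | h1
      · exact h1
      · linarith [h.one]
      · linarith [h.neg h1]
    have hsum : 2 ≤ b + c := by
      obtain ⟨z, hz⟩ := hn
      have h1 : (1 : ℤ) < z := by
        have : (1 : ℝ) < z := by linarith
        exact_mod_cast this
      have h2 : (2 : ℝ) ≤ z := by exact_mod_cast h1
      linarith
    have hmid := h.chord c 1 (2 - c) hc.le hc1 (by linarith)
    have hmono : f b ≤ f (2 - c) := by
      rcases (by linarith : 2 - c ≤ b).eq_or_lt with h1 | h1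
      · rw [h1]
      · exact (h.anti (by linarith) h1).le
    rw [h.one] at hmid
    nlinarith [mul_nonneg (by linarith : (0 : ℝ) ≤ 1 - c)
      (by linarith : 0 ≤ f (2 - c) + f c)]

end NormalizedConcave

/-- Subtracting the line `k ↦ k * ω 1` normalizes `ω`. -/
lemma normalizedConcave_sub_line {ω : ℝ → ℝ} (h0 : ω 0 = 0)
    (hconc : StrictConcaveOn ℝ (Set.Ici (0 : ℝ)) ω) :
    NormalizedConcave (fun k => ω k - k * ω 1) where
  zero := by simp [h0]
  one := by simp
  chord x y z hx hxy hyz := by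
    have hs := hconc.slope_anti_adjacent (Set.mem_Ici.2 hx)
      (Set.mem_Ici.2 (by linarith : (0 : ℝ) ≤ z)) hxy hyz
    rw [div_lt_div_iff₀ (by linarith) (by linarith)] at hs
    linarith

/-- If `ω` is odd and strictly concave on `[0, ∞)`, then any secant line of slope `ω(1)`
whose endpoints have abscissas an integer apart passes through points on the line
`k ↦ k·ω(1)`: collisions occur only at the origin. -/
theorem odd_concave_collisions_at_origin (ω : ℝ → ℝ)
    (hodd : ∀ k : ℝ, ω (-k) = -ω k)
    (hconc : StrictConcaveOn ℝ (Set.Ici (0 : ℝ)) ω) :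
    ∀ a b : ℝ, a < b → (∃ z : ℤ, b - a = (z : ℝ)) →
      ω b - ω a = (b - a) * ω 1 →
      ω a = a * ω 1 ∧ ω b = b * ω 1 := by
  intro a b hab hz hsec
  have h0 : ω 0 = 0 := by
    have := hodd 0
    rw [neg_zero] at this
    linarith
  have h := normalizedConcave_sub_line h0 hconc
  have hgap : 1 ≤ b - a := by
    obtain ⟨z, hz⟩ := hz
    have h1 : (0 : ℤ) < z := by
      have : (0 : ℝ) < z := by linarith
      exact_mod_cast this
    rw [hz]
    exact_mod_cast h1
  suffices ω a - a * ω 1 = 0 by constructor <;> linarith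
  have ha' := hodd a
  have hb' := hodd b
  rcases le_or_gt 0 a with ha | ha
  · exact h.zero_of_same_side ha hgap (by linarith)
  rcases le_or_gt b 0 with hb | hb
  · have := h.zero_of_same_side (a := -b) (b := -a) (by linarith) (by linarith)
      (by simp only [ha', hb']; linarith)
    simp only [hb'] at this
    linarith
  rcases le_total (-a) b with hle | hle
  · have := h.zero_of_opposite_sides (b := b) (c := -a) (by linarith) hle
      (by simpa [sub_eq_add_neg] using hz) (by simp only [ha']; linarith)
    linarith
  · have := h.zero_of_opposite_sides (b := -a) (c := b) hb hle
      (by simpa [sub_eq_add_neg, add_comm] using hz) (by simp only [ha']; linarith)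
    simp only [ha'] at this
    linarith
end

section
/- For all real g > 0 and h > 0, the function k ↦ √(g·k·tanh(k·h)) is strictly concave on the interval (0, ∞). -/
/-!
For `F > 0`, the second derivative of `√F` has the sign of `2 F F'' - F' ^ 2`. For
`F k = g k tanh (k h)`, put `T = tanh (k h)`, `S = 1 - T ^ 2` and `y = k h`. Then
`F' = g (T + y S)`, `F'' = 2 g h (S - y T S)`, and the required inequality is the
sum-of-squares identity
`F' ^ 2 - 2 F F'' = g ^ 2 ((T - y S) ^ 2 + 4 y ^ 2 T ^ 2 S)`,
whose right-hand side is positive because `0 < T < 1`.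
-/

lemma hasDerivAt_tanh_mul (h x : ℝ) :
    HasDerivAt (fun k => Real.tanh (k * h)) (h * (1 - Real.tanh (x * h) ^ 2)) x := by
  have hc := (Real.cosh_pos (x * h)).ne'
  have hl : HasDerivAt (fun k : ℝ => k * h) h x := by
    simpa using (hasDerivAt_id x).mul_const h
  have hd := hl.sinh.div hl.cosh hc
  have he : (fun k => Real.tanh (k * h)) = fun k => Real.sinh (k * h) / Real.cosh (k * h) :=
    funext fun k => Real.tanh_eq_sinh_div_cosh _
  rw [he]
  refine hd.congr_deriv ?_
  rw [Real.tanh_eq_sinh_div_cosh]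
  field_simp

lemma tanh_pos_of_pos {x : ℝ} (hx : 0 < x) : 0 < Real.tanh x := by
  rw [Real.tanh_eq_sinh_div_cosh]
  exact div_pos (Real.sinh_pos_iff.2 hx) (Real.cosh_pos x)

/-- Second-derivative criterion for the strict concavity of `√F`, free of square roots. -/
lemma strictConcaveOn_sqrt_of_deriv {F F' F'' : ℝ → ℝ}
    (hF : ∀ x, 0 < x → 0 < F x) (h1 : ∀ x, 0 < x → HasDerivAt F (F' x) x)
    (h2 : ∀ x, 0 < x → HasDerivAt F' (F'' x) x)
    (hlt : ∀ x, 0 < x → 2 * F x * F'' x < F' x ^ 2) :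
    StrictConcaveOn ℝ (Set.Ioi (0 : ℝ)) (fun k => Real.sqrt (F k)) := by
  have hd : ∀ x, 0 < x →
      HasDerivAt (fun k => Real.sqrt (F k)) (F' x / (2 * Real.sqrt (F x))) x :=
    fun x hx => (h1 x hx).sqrt (hF x hx).ne'
  refine strictConcaveOn_of_deriv2_neg' (convex_Ioi 0)
    (fun x hx => (hd x hx).continuousAt.continuousWithinAt) fun x hx => ?_
  replace hx : 0 < x := hx
  have he : deriv (fun k => Real.sqrt (F k)) =ᶠ[nhds x]
      fun y => F' y / (2 * Real.sqrt (F y)) := by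
    filter_upwards [Ioi_mem_nhds hx] with y hy using (hd y hy).deriv
  have hs : 0 < Real.sqrt (F x) := Real.sqrt_pos.2 (hF x hx)
  have hq : Real.sqrt (F x) ^ 2 = F x := Real.sq_sqrt (hF x hx).le
  have hdd := (h2 x hx).div ((hd x hx).const_mul 2) (by positivity)
  change deriv (deriv fun k => Real.sqrt (F k)) x < 0
  rw [he.deriv_eq]
  refine hdd.deriv.trans_lt ?_
  have hl := hlt x hx
  rw [← hq] at hl
  refine div_neg_of_neg_of_pos ?_ (by positivity)
  have e : F'' x * (2 * Real.sqrt (F x)) - F' x * (2 * (F' x / (2 * Real.sqrt (F x))))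
      = (2 * Real.sqrt (F x) ^ 2 * F'' x - F' x ^ 2) / Real.sqrt (F x) := by
    field_simp
  rw [e]
  exact div_neg_of_neg_of_pos (by linarith) hs

/-- The positive branch `k ↦ √(g k tanh(k h))` of the water-wave dispersion relation
is strictly concave on `(0, ∞)` for all `g > 0`, `h > 0`. -/
theorem waterwave_dispersion_strictConcave (g h : ℝ) (hg : 0 < g) (hh : 0 < h) :
    StrictConcaveOn ℝ (Set.Ioi (0 : ℝ))
      (fun k => Real.sqrt (g * k * Real.tanh (k * h))) := by
  refine strictConcaveOn_sqrt_of_deriv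
    (F' := fun k => g * (Real.tanh (k * h) + k * (h * (1 - Real.tanh (k * h) ^ 2))))
    (F'' := fun k => g * (2 * h * (1 - Real.tanh (k * h) ^ 2)
      - 2 * h ^ 2 * k * Real.tanh (k * h) * (1 - Real.tanh (k * h) ^ 2)))
    (fun x hx => ?_) (fun x _ => ?_) (fun x _ => ?_) (fun x hx => ?_)
  · have := tanh_pos_of_pos (mul_pos hx hh)
    positivity
  · refine (((hasDerivAt_id x).const_mul g).mul (hasDerivAt_tanh_mul h x)).congr_deriv ?_
    simp only [id]
    ring
  · have hT := hasDerivAt_tanh_mul h x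
    refine ((hT.add ((hasDerivAt_id x).mul
      (((hT.pow 2).const_sub 1).const_mul h))).const_mul g).congr_deriv ?_
    simp only [id, Pi.pow_apply]
    push_cast
    ring
  · have hT := tanh_pos_of_pos (mul_pos hx hh)
    have hS : 0 < 1 - Real.tanh (x * h) ^ 2 := sub_pos.2 (Real.tanh_sq_lt_one _)
    generalize Real.tanh (x * h) = T at hT hS
    have hpos : 0 < g ^ 2 * ((T - x * h * (1 - T ^ 2)) ^ 2
        + 4 * (x * h) ^ 2 * T ^ 2 * (1 - T ^ 2)) := by positivity
    linarith
end

section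
/- Let Ω(k) = k − k³. For every real k and every nonzero integer l, if Ω(k + l) = Ω(k), then Ω(k) = 0 (and hence Ω(k+l) = 0). In other words, all collisions of the stability eigenvalues λ_n^{(μ)} = i(n+μ)(1 + (n+μ)²) of the zero-amplitude solution of the generalized KdV equation occur at the origin, so small-amplitude periodic traveling waves of gKdV admit no high-frequency instabilities due to two-eigenvalue collisions. -/
/-!
Dividing `Ω(k + l) = Ω(k)` by `l ≠ 0` leaves the conic `3k² + 3kl + l² = 1`, that is,
`3(2k + l)² = 4 - l²`. Real solutions need `|l| ≤ 2`, and for `l = ±1, ±2` they are all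
among `k = 0, ±1`, the zeros of `Ω`.
-/

/-- For `Ω(k) = k - k³`, any collision `Ω(k+l) = Ω(k)` with nonzero integer shift `l`
forces `Ω(k) = 0`: all gKdV eigenvalue collisions occur at the origin. -/
theorem gkdv_collisions_at_origin :
    ∀ (k : ℝ) (l : ℤ), l ≠ 0 →
      (k + (l : ℝ)) - (k + (l : ℝ))^3 = k - k^3 →
      k - k^3 = 0 := by
  intro k l hl h
  have hl' : (l : ℝ) ≠ 0 := by exact_mod_cast hl
  have conic : 3 * k ^ 2 + 3 * k * l + (l : ℝ) ^ 2 = 1 := by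
    apply mul_left_cancel₀ hl'
    linear_combination -h
  have hsq : l ^ 2 ≤ 4 := by
    have : (l : ℝ) ^ 2 ≤ 4 := by nlinarith [sq_nonneg (2 * k + l)]
    exact_mod_cast this
  have hlow : -2 ≤ l := by nlinarith
  have hupp : l ≤ 2 := by nlinarith
  interval_cases l
  · -- `l = -2`: the conic is `3(k - 1)² = 0`.
    have hk : k - 1 = 0 := by
      apply pow_eq_zero_iff (two_ne_zero) |>.mp
      push_cast at conic
      linear_combination conic / 3
    linear_combination (-k ^ 2 - k) * hk
  · -- `l = -1`: the conic is `3k(k - 1) = 0`.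
    push_cast at conic
    linear_combination (-(k + 1) / 3) * conic
  · exact absurd rfl hl
  · -- `l = 1`: the conic is `3k(k + 1) = 0`.
    push_cast at conic
    linear_combination ((1 - k) / 3) * conic
  · -- `l = 2`: the conic is `3(k + 1)² = 0`.
    have hk : k + 1 = 0 := by
      apply pow_eq_zero_iff (two_ne_zero) |>.mp
      push_cast at conic
      linear_combination conic / 3
    linear_combination (k - k ^ 2) * hk
end

section
/- Let μ = (√10 − 3)/2. Then μ ∈ (−1/2, 1/2], √(1 + (3+μ)²) + √(1 + μ²) = 3√2, and √2·(3+μ) − √(1 + (3+μ)²) = √5/2. Hence the Sine-Gordon stability eigenvalues λ_{3,1}^{(μ)} = i(3+μ)√2 − i√(1+(3+μ)²) and λ_{0,2}^{(μ)} = iμ√2 + i√(1+μ²) coincide and are equal to i√5/2 ≠ 0. -/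
/-!
Since `√10 = √2 * √5`, both radicands are perfect squares in `ℚ(√2, √5)`:
`1 + (3 + μ)² = (23 + 6√10)/4 = ((3√2 + √5)/2)²` and
`1 + μ² = (23 - 6√10)/4 = ((3√2 - √5)/2)²`. With both roots denested, every claimed
identity is polynomial in `√2` and `√5`, and the complex identities are `I` times real ones.
-/

open Real Complex

/-- Explicit Sine-Gordon eigenvalue collision: for `μ = (√10 - 3)/2`, the Floquet
exponent lies in `(-1/2, 1/2]`, the collision condition
`√(1+(3+μ)²) + √(1+μ²) = 3√2` holds, the collided height is `√5/2`, and hence the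
eigenvalues `λ_{3,1}^{(μ)}` and `λ_{0,2}^{(μ)}` coincide, equal `i√5/2`, and are nonzero. -/
theorem sine_gordon_explicit_collision :
    let μ : ℝ := (Real.sqrt 10 - 3) / 2
    (-(1/2) < μ ∧ μ ≤ 1/2) ∧
    Real.sqrt (1 + (3 + μ)^2) + Real.sqrt (1 + μ^2) = 3 * Real.sqrt 2 ∧
    Real.sqrt 2 * (3 + μ) - Real.sqrt (1 + (3 + μ)^2) = Real.sqrt 5 / 2 ∧
    (Complex.I * ((3 : ℝ) + μ) * (Real.sqrt 2 : ℝ) -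
        Complex.I * (Real.sqrt (1 + (3 + μ)^2) : ℝ) =
      Complex.I * (μ : ℝ) * (Real.sqrt 2 : ℝ) +
        Complex.I * (Real.sqrt (1 + μ^2) : ℝ)) ∧
    (Complex.I * ((3 : ℝ) + μ) * (Real.sqrt 2 : ℝ) -
        Complex.I * (Real.sqrt (1 + (3 + μ)^2) : ℝ) =
      Complex.I * ((Real.sqrt 5 / 2 : ℝ) : ℂ)) ∧
    Complex.I * ((Real.sqrt 5 / 2 : ℝ) : ℂ) ≠ 0 := by
  intro μ
  have h2 : Real.sqrt 2 ^ 2 = 2 := Real.sq_sqrt (by norm_num)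
  have h5 : Real.sqrt 5 ^ 2 = 5 := Real.sq_sqrt (by norm_num)
  have p2 : 0 < Real.sqrt 2 := Real.sqrt_pos.2 (by norm_num)
  have p5 : 0 < Real.sqrt 5 := Real.sqrt_pos.2 (by norm_num)
  have h10 : Real.sqrt 10 = Real.sqrt 2 * Real.sqrt 5 := by
    rw [← Real.sqrt_mul (by norm_num)]
    norm_num
  have hμ : μ = (Real.sqrt 2 * Real.sqrt 5 - 3) / 2 := by
    rw [← h10]
  have hs : Real.sqrt (1 + (3 + μ) ^ 2) = (3 * Real.sqrt 2 + Real.sqrt 5) / 2 := by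
    rw [Real.sqrt_eq_iff_eq_sq (by positivity) (by positivity), hμ]
    linear_combination (Real.sqrt 5 ^ 2 / 4 - 9 / 4) * h2 + (1 / 4) * h5
  have ht : Real.sqrt (1 + μ ^ 2) = (3 * Real.sqrt 2 - Real.sqrt 5) / 2 := by
    -- `√5 < 3√2` selects the nonnegative root.
    have hpos : 0 < (3 * Real.sqrt 2 - Real.sqrt 5) / 2 := by nlinarith
    rw [Real.sqrt_eq_iff_eq_sq (by positivity) hpos.le, hμ]
    linear_combination (Real.sqrt 5 ^ 2 / 4 - 9 / 4) * h2 + (1 / 4) * h5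
  have hsum : Real.sqrt (1 + (3 + μ) ^ 2) + Real.sqrt (1 + μ ^ 2) = 3 * Real.sqrt 2 := by
    rw [hs, ht]
    ring
  have hdiff : Real.sqrt 2 * (3 + μ) - Real.sqrt (1 + (3 + μ) ^ 2) = Real.sqrt 5 / 2 := by
    rw [hs, hμ]
    linear_combination (Real.sqrt 5 / 2) * h2
  have hsumC := congrArg (fun x : ℝ => (x : ℂ)) hsum
  have hdiffC := congrArg (fun x : ℝ => (x : ℂ)) hdiff
  refine ⟨⟨?_, ?_⟩, hsum, hdiff, ?_, ?_, ?_⟩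
  · have : 2 < Real.sqrt 10 := Real.lt_sqrt_of_sq_lt (by norm_num)
    change -(1 / 2) < (Real.sqrt 10 - 3) / 2
    linarith
  · have : Real.sqrt 10 ≤ 4 := Real.sqrt_le_iff.2 (by norm_num)
    change (Real.sqrt 10 - 3) / 2 ≤ 1 / 2
    linarith
  · push_cast at hsumC ⊢
    linear_combination -Complex.I * hsumC
  · push_cast at hdiffC ⊢
    linear_combination Complex.I * hdiffC
  · exact mul_ne_zero Complex.I_ne_zero (Complex.ofReal_ne_zero.2 (by positivity))
end

section
/- For every integer d ≥ 2 there exist integers n₁, n₂ with n₁ − n₂ = d and a real number μ ∈ (−1/2, 1/2] such that √(1 + (n₁+μ)²) + √(1 + (n₂+μ)²) = √2·d. That is, the zero-amplitude Sine-Gordon stability spectrum has eigenvalue collisions between the two dispersion branches for every integer gap d ≥ 2. -/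
/-!
Put `x = n₁ + μ = d/2 + s`, so that `n₂ + μ = x - d = -d/2 + s`. If the two roots `a`, `b` satisfy
`a + b = √2 d`, then `a² - b² = x² - (x - d)² = 2ds` forces `a - b = √2 s`, so `a = (d + s)/√2` and
`b = (d - s)/√2`. Both equations `a² = 1 + x²` and `b² = 1 + (x - d)²` then reduce to
`s² = d²/2 - 2`, which has a real solution exactly because `d ≥ 2`. Finally `x` is split into an
integer part and a remainder in `(-1/2, 1/2]`.
-/

/-- For every integer gap `d ≥ 2`, the zero-amplitude Sine-Gordon stability spectrum
has an eigenvalue collision between the two dispersion branches: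
there exist `n₁ - n₂ = d` and `μ ∈ (-1/2, 1/2]` with
`√(1+(n₁+μ)²) + √(1+(n₂+μ)²) = √2 d`. -/
theorem sine_gordon_collisions_every_gap :
    ∀ d : ℤ, 2 ≤ d →
      ∃ (n₁ n₂ : ℤ) (μ : ℝ), n₁ - n₂ = d ∧ -(1/2) < μ ∧ μ ≤ 1/2 ∧
        Real.sqrt (1 + ((n₁ : ℝ) + μ)^2) + Real.sqrt (1 + ((n₂ : ℝ) + μ)^2) =
          Real.sqrt 2 * (d : ℝ) := by
  intro d hd
  have hd' : (2 : ℝ) ≤ (d : ℝ) := by exact_mod_cast hd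
  obtain ⟨s, hs0, hs⟩ : ∃ s : ℝ, 0 ≤ s ∧ s ^ 2 = (d : ℝ) ^ 2 / 2 - 2 :=
    ⟨√((d : ℝ) ^ 2 / 2 - 2), Real.sqrt_nonneg _, Real.sq_sqrt (by nlinarith)⟩
  -- needed so that `(d - s)/√2` is the nonnegative root
  have hsd : s ≤ d := by nlinarith
  have h2 : √(2 : ℝ) ^ 2 = 2 := Real.sq_sqrt (by norm_num)
  have h20 : 0 ≤ √(2 : ℝ) := Real.sqrt_nonneg 2
  have ha : √(1 + ((d : ℝ) / 2 + s) ^ 2) = √2 / 2 * (d + s) := by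
    rw [show 1 + ((d : ℝ) / 2 + s) ^ 2 = (√2 / 2 * (d + s)) ^ 2 by
      rw [mul_pow, div_pow, h2]; linarith]
    exact Real.sqrt_sq (mul_nonneg (by positivity) (by linarith))
  have hb : √(1 + (-(d : ℝ) / 2 + s) ^ 2) = √2 / 2 * (d - s) := by
    rw [show 1 + (-(d : ℝ) / 2 + s) ^ 2 = (√2 / 2 * (d - s)) ^ 2 by
      rw [mul_pow, div_pow, h2]; linarith]
    exact Real.sqrt_sq (mul_nonneg (by positivity) (by linarith))
  -- rounding half-integers down puts the remainder in `(-1/2, 1/2]`, closed on the right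
  obtain ⟨n, hn⟩ : ∃ n : ℤ, n = ⌈(d : ℝ) / 2 + s - 1 / 2⌉ := ⟨_, rfl⟩
  have hle := Int.le_ceil ((d : ℝ) / 2 + s - 1 / 2)
  have hlt := Int.ceil_lt_add_one ((d : ℝ) / 2 + s - 1 / 2)
  rw [← hn] at hle hlt
  refine ⟨n, n - d, (d : ℝ) / 2 + s - n, by ring, by linarith, by linarith, ?_⟩
  rw [show (n : ℝ) + ((d : ℝ) / 2 + s - n) = (d : ℝ) / 2 + s by ring,
    show ((n - d : ℤ) : ℝ) + ((d : ℝ) / 2 + s - n) = -(d : ℝ) / 2 + s by push_cast; ring, ha, hb]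
  ring
end

section
/- Both functions k ↦ √2·k − √(1+k²) and k ↦ √2·k + √(1+k²) are strictly increasing on ℝ. Consequently, for the Sine-Gordon equation, two distinct zero-amplitude stability eigenvalues coming from the same branch of the dispersion relation (same l and same μ but different n) never collide: any eigenvalue collision must involve both branches. -/
/-! The function `k ↦ √(1 + k²)` is 1-Lipschitz, so its increments are dominated by those of
`k ↦ √2 k`, whose slope exceeds `1`. Hence adding or subtracting it leaves a strictly increasing
function, and injectivity along the shifted lattice `n + μ` rules out collisions within a branch. -/

/-- One half of the 1-Lipschitz bound; the other half follows by the evenness of `√(1 + k²)`. -/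
lemma sqrt_one_add_sq_le {a b : ℝ} (h : a ≤ b) :
    Real.sqrt (1 + b^2) ≤ Real.sqrt (1 + a^2) + (b - a) := by
  have hs := Real.sq_sqrt (show (0 : ℝ) ≤ 1 + a^2 by positivity)
  have h0 := Real.sqrt_nonneg (1 + a^2)
  have ha : a ≤ Real.sqrt (1 + a^2) := Real.le_sqrt_of_sq_le (by linarith)
  refine Real.sqrt_le_iff.mpr ⟨by linarith, ?_⟩
  nlinarith [mul_nonneg (sub_nonneg.mpr h) (sub_nonneg.mpr ha)]

lemma sub_lt_sqrt_two_mul_sub {a b : ℝ} (h : a < b) :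
    b - a < Real.sqrt 2 * b - Real.sqrt 2 * a := by
  have h2 : (1 : ℝ) < Real.sqrt 2 := Real.lt_sqrt_of_sq_lt (by norm_num)
  nlinarith [mul_pos (sub_pos.mpr h2) (sub_pos.mpr h)]

lemma strictMono_sqrt_two_mul_sub :
    StrictMono (fun k : ℝ => Real.sqrt 2 * k - Real.sqrt (1 + k^2)) := by
  intro a b h
  have h1 := sqrt_one_add_sq_le h.le
  have h2 := sub_lt_sqrt_two_mul_sub h
  dsimp only
  linarith

lemma strictMono_sqrt_two_mul_add :
    StrictMono (fun k : ℝ => Real.sqrt 2 * k + Real.sqrt (1 + k^2)) := by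
  intro a b h
  have h1 := sqrt_one_add_sq_le (neg_le_neg h.le)
  have h2 := sub_lt_sqrt_two_mul_sub h
  rw [neg_sq, neg_sq] at h1
  dsimp only
  linarith

/-- Both `k ↦ √2 k - √(1+k²)` and `k ↦ √2 k + √(1+k²)` are strictly increasing;
consequently two distinct zero-amplitude Sine-Gordon eigenvalues from the same
dispersion branch (same `l`, same `μ`, different `n`) never collide. -/
theorem sine_gordon_same_branch_no_collision :
    StrictMono (fun k : ℝ => Real.sqrt 2 * k - Real.sqrt (1 + k^2)) ∧
    StrictMono (fun k : ℝ => Real.sqrt 2 * k + Real.sqrt (1 + k^2)) ∧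
    (∀ (n m : ℤ), n ≠ m → ∀ μ : ℝ,
      Real.sqrt 2 * ((n : ℝ) + μ) - Real.sqrt (1 + ((n : ℝ) + μ)^2) ≠
        Real.sqrt 2 * ((m : ℝ) + μ) - Real.sqrt (1 + ((m : ℝ) + μ)^2)) ∧
    (∀ (n m : ℤ), n ≠ m → ∀ μ : ℝ,
      Real.sqrt 2 * ((n : ℝ) + μ) + Real.sqrt (1 + ((n : ℝ) + μ)^2) ≠
        Real.sqrt 2 * ((m : ℝ) + μ) + Real.sqrt (1 + ((m : ℝ) + μ)^2)) := by
  refine ⟨strictMono_sqrt_two_mul_sub, strictMono_sqrt_two_mul_add, ?_, ?_⟩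
  · intro n m hnm μ h
    exact hnm (by exact_mod_cast add_right_cancel (strictMono_sqrt_two_mul_sub.injective h))
  · intro n m hnm μ h
    exact hnm (by exact_mod_cast add_right_cancel (strictMono_sqrt_two_mul_add.injective h))
end

section
/- Let g > 0, h > 0, ω(k) = √(g·k·tanh(k·h)) for k ≥ 0, and c = ω(1). For every integer d ≥ 2 there exists k₂ > 0 such that ω(k₂ + d) + ω(k₂) = c·d, and moreover c·(k₂ + d) − ω(k₂ + d) > 0. That is, for every integer gap d ≥ 2 the two branches of the water-wave dispersion relation produce an eigenvalue collision away from the origin. -/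
/-!
Put `F k = ω (k + d) + ω k`, a continuous function of `k`. The argument is the intermediate value
theorem for `F` on `[0, d²]`.

* `tanh` is strictly concave on `[0, ∞)`, so `tanh (m x) < m tanh x` for `m > 1` and `x > 0`
  (`WaterWave.tanh_mul_lt`). Hence `ω m < c m` for every `m > 1` (`WaterWave.omega_lt`). At
  `m = d` this gives `F 0 = ω d < c d`.
* `tanh` is increasing, so `ω (d²) ≥ √(d²) c = c d`, and therefore `F (d²) ≥ c d`.

A solution `k₂` of `F k₂ = c d` in `[0, d²]` is thus nonzero, and `ω (k₂ + d) < c (k₂ + d)` is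
again `WaterWave.omega_lt`, since `k₂ + d > 1`.
-/

namespace WaterWave

lemma hasDerivAt_tanh (x : ℝ) : HasDerivAt Real.tanh (1 / Real.cosh x ^ 2) x := by
  have h := (Real.hasDerivAt_sinh x).div (Real.hasDerivAt_cosh x) (Real.cosh_pos x).ne'
  have e : Real.tanh = Real.sinh / Real.cosh := by
    funext y
    exact Real.tanh_eq_sinh_div_cosh y
  rw [e]
  have e' : 1 / Real.cosh x ^ 2 =
      (Real.cosh x * Real.cosh x - Real.sinh x * Real.sinh x) / Real.cosh x ^ 2 := by
    rw [← Real.cosh_sq_sub_sinh_sq x]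
    ring
  rw [e']
  exact h

lemma continuous_tanh : Continuous Real.tanh :=
  continuous_iff_continuousAt.2 fun x => (hasDerivAt_tanh x).continuousAt

lemma tanh_mono : Monotone Real.tanh :=
  monotone_of_hasDerivAt_nonneg hasDerivAt_tanh fun x => by
    have := Real.cosh_pos x
    positivity

lemma tanh_pos {x : ℝ} (hx : 0 < x) : 0 < Real.tanh x := by
  rw [Real.tanh_eq_sinh_div_cosh]
  exact div_pos (Real.sinh_pos_iff.2 hx) (Real.cosh_pos x)

/-- Strict subhomogeneity of `tanh` on the positive axis: the derivative
`m (1 / cosh² y - 1 / cosh² (m y))` of `m tanh y - tanh (m y)` is positive for `y > 0`. -/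
lemma tanh_mul_lt {m x : ℝ} (hm : 1 < m) (hx : 0 < x) :
    Real.tanh (m * x) < m * Real.tanh x := by
  have hd : ∀ y, HasDerivAt (fun y => m * Real.tanh y - Real.tanh (m * y))
      (m * (1 / Real.cosh y ^ 2) - 1 / Real.cosh (m * y) ^ 2 * (m * 1)) y := fun y =>
    ((hasDerivAt_tanh y).const_mul m).sub
      ((hasDerivAt_tanh (m * y)).comp y ((hasDerivAt_id y).const_mul m))
  have hmono : StrictMonoOn (fun y => m * Real.tanh y - Real.tanh (m * y)) (Set.Ici 0) := by
    refine strictMonoOn_of_deriv_pos (convex_Ici 0)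
      (fun y _ => (hd y).continuousAt.continuousWithinAt) fun y hy => ?_
    rw [interior_Ici, Set.mem_Ioi] at hy
    rw [(hd y).deriv]
    have hlt : Real.cosh y < Real.cosh (m * y) := by
      rw [Real.cosh_lt_cosh, abs_of_pos hy, abs_of_pos (by positivity)]
      nlinarith
    have hc := Real.cosh_pos y
    have hinv : 1 / Real.cosh (m * y) ^ 2 < 1 / Real.cosh y ^ 2 := by gcongr
    nlinarith
  have h := hmono Set.self_mem_Ici hx.le hx
  simp only [mul_zero, Real.tanh_zero, sub_zero] at h
  linarith

/-- Waves of wavenumber `m > 1` have phase speed less than `c`: `ω m < c m`. -/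
lemma omega_lt {g h m : ℝ} (hg : 0 < g) (hh : 0 < h) (hm : 1 < m) :
    √(g * m * Real.tanh (m * h)) < √(g * 1 * Real.tanh (1 * h)) * m := by
  have hm0 : 0 < m := by linarith
  rw [Real.sqrt_lt' (by have := tanh_pos hh; rw [one_mul]; positivity), mul_pow,
    Real.sq_sqrt (by have := tanh_pos hh; rw [one_mul]; positivity), mul_one, one_mul]
  have := mul_lt_mul_of_pos_left (tanh_mul_lt hm hh) (mul_pos hg hm0)
  linarith

/-- The lower bound `ω (d²) ≥ c d`, from `tanh (d² h) ≥ tanh h`. -/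
lemma le_omega_sq {g h d : ℝ} (hg : 0 < g) (hh : 0 < h) (hd : 1 ≤ d) :
    √(g * 1 * Real.tanh (1 * h)) * d ≤ √(g * d ^ 2 * Real.tanh (d ^ 2 * h)) := by
  have ht := tanh_pos hh
  apply Real.le_sqrt_of_sq_le
  rw [mul_pow, Real.sq_sqrt (by rw [one_mul]; positivity), mul_one, one_mul]
  have hle : Real.tanh h ≤ Real.tanh (d ^ 2 * h) :=
    tanh_mono (le_mul_of_one_le_left hh.le (one_le_pow₀ hd))
  have := mul_le_mul_of_nonneg_left hle (show 0 ≤ g * d ^ 2 by positivity)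
  linarith

end WaterWave


/-- For every integer gap `d ≥ 2`, the two branches of the water-wave dispersion
relation `ω(k) = √(g k tanh(k h))` produce an eigenvalue collision away from the
origin: there is `k₂ > 0` with `ω(k₂+d) + ω(k₂) = c d` (where `c = ω(1)`) and
`c (k₂+d) - ω(k₂+d) > 0`. -/
theorem waterwave_collisions_every_gap (g h : ℝ) (hg : 0 < g) (hh : 0 < h) :
    ∀ d : ℤ, 2 ≤ d →
      ∃ k₂ : ℝ, 0 < k₂ ∧
        Real.sqrt (g * (k₂ + (d : ℝ)) * Real.tanh ((k₂ + (d : ℝ)) * h)) +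
          Real.sqrt (g * k₂ * Real.tanh (k₂ * h)) =
            Real.sqrt (g * 1 * Real.tanh (1 * h)) * (d : ℝ) ∧
        Real.sqrt (g * 1 * Real.tanh (1 * h)) * (k₂ + (d : ℝ)) -
          Real.sqrt (g * (k₂ + (d : ℝ)) * Real.tanh ((k₂ + (d : ℝ)) * h)) > 0 := by
  intro d hd
  have hd2 : (2 : ℝ) ≤ d := by exact_mod_cast hd
  have hcont : Continuous fun k : ℝ =>
      √(g * (k + (d : ℝ)) * Real.tanh ((k + (d : ℝ)) * h)) + √(g * k * Real.tanh (k * h)) := by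
    have := WaterWave.continuous_tanh
    fun_prop
  have h0 := WaterWave.omega_lt hg hh (show (1 : ℝ) < d by linarith)
  have h1 := WaterWave.le_omega_sq hg hh (show (1 : ℝ) ≤ d by linarith)
  obtain ⟨k, ⟨hk0, -⟩, hk⟩ := intermediate_value_Icc (sq_nonneg (d : ℝ)) hcont.continuousOn
    (show √(g * 1 * Real.tanh (1 * h)) * (d : ℝ) ∈ Set.Icc _ _ from
      ⟨by simpa using h0.le, h1.trans (le_add_of_nonneg_left (Real.sqrt_nonneg _))⟩)
  have hk' : k ≠ 0 := by
    rintro rfl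
    simp only [zero_add, mul_zero, zero_mul, Real.sqrt_zero, add_zero] at hk
    exact h0.ne hk
  exact ⟨k, lt_of_le_of_ne hk0 hk'.symm, hk,
    sub_pos.2 (WaterWave.omega_lt hg hh (by linarith))⟩
end

section
/- For all real g > 0, h > 0 and a < 0, the function k ↦ k²·(g·tanh(k·h)/k + 2a) tends to −∞ as k → ∞; in particular there exists K > 0 such that g·tanh(kh)/k + 2a < 0 for all |k| > K, and the growth rates of the corresponding unstable Fourier modes of the flat state q = a of the Boussinesq–Whitham equation are unbounded (the initial-value problem is ill-posed). -/
/-!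
Since `|tanh| < 1`, the Whitham symbol `g tanh(kh)/k` is at most `g/|k|`, which is below `-a` once
`|k| > g/(-a)`. There the bracket `g tanh(kh)/k + 2a` is below `a < 0`, which gives the sign claim,
and the squared frequency is at most `a k²`, which gives the limit.
-/

open Filter

/-- The bracket is bounded away from zero (below `a`, not merely negative) for large `|k|`; this
uniform gap is what makes the product with `k²` diverge. -/
theorem whitham_symbol_add_lt (g h a : ℝ) (hg : 0 < g) (ha : a < 0) (k : ℝ)
    (hk : g / (-a) < |k|) : g * Real.tanh (k * h) / k + 2 * a < a := by
  have hk0 : 0 < |k| := (div_pos hg (neg_pos.2 ha)).trans hk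
  have h1 : g * Real.tanh (k * h) / k ≤ g / |k| := by
    refine (le_abs_self _).trans ?_
    rw [abs_div, abs_mul, abs_of_pos hg]
    gcongr
    exact mul_le_of_le_one_right hg.le (Real.abs_tanh_lt_one _).le
  have h2 : g / |k| < -a := (div_lt_comm₀ (neg_pos.2 ha) hk0).1 hk
  linarith

/-- For `a < 0`, the squared frequency `k²(g tanh(kh)/k + 2a)` of the linearized
Boussinesq–Whitham equation about the flat state `q = a` tends to `-∞` as `k → ∞`,
and `g tanh(kh)/k + 2a < 0` for all sufficiently large `|k|`: the initial-value
problem is ill-posed. -/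
theorem bw_flat_state_negative_average_illposed (g h a : ℝ)
    (hg : 0 < g) (hh : 0 < h) (ha : a < 0) :
    Tendsto (fun k : ℝ => k^2 * (g * Real.tanh (k * h) / k + 2 * a)) atTop atBot ∧
    ∃ K : ℝ, 0 < K ∧ ∀ k : ℝ, K < |k| → g * Real.tanh (k * h) / k + 2 * a < 0 := by
  refine ⟨?_, g / (-a), div_pos hg (neg_pos.2 ha),
    fun k hk => (whitham_symbol_add_lt g h a hg ha k hk).trans ha⟩
  have hlim : Tendsto (fun k : ℝ => k ^ 2 * a) atTop atBot :=
    (tendsto_pow_atTop two_ne_zero).atTop_mul_const_of_neg ha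
  refine tendsto_atBot_mono' atTop ?_ hlim
  filter_upwards [eventually_gt_atTop (g / (-a))] with k hk
  have := whitham_symbol_add_lt g h a hg ha k (hk.trans_le (le_abs_self k))
  gcongr
end
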